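/- arXiv:2105.03286 — 2 statements merged into one kernel-verified Lean document; each statement's English description precedes it below -/
import Mathlib

section
/- Let X be a set and let r₁, r₂ be two involutive set-theoretic YBE solutions on X, both non-degenerate in the sense that in r_i(x,y) = (σ_x(y), γ_y(x)) all the maps σ_x and γ_y are bijections. Then there exists a Drinfeld twist (F,Φ,Ψ) on (X,r₁) such that r₂ = F∘r₁∘F⁻¹. -/
namespace YBETwist

/-- Apply a map on `X × X` to the factors 1,2 of a triple: `f₁₂ = f × id`. -/
def E12 {X : Type*} (f : (X × X) ≃ (X × X)) : (X × X × X) ≃ (X × X × X) :=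
  ((Equiv.prodAssoc X X X).symm.trans (f.prodCongr (Equiv.refl X))).trans
    (Equiv.prodAssoc X X X)

/-- Apply a map on `X × X` to the factors 2,3 of a triple: `f₂₃ = id × f`. -/
def E23 {X : Type*} (f : (X × X) ≃ (X × X)) : (X × X × X) ≃ (X × X × X) :=
  (Equiv.refl X).prodCongr f

/-- The braid relation `r₂₃ ∘ r₁₂ ∘ r₂₃ = r₁₂ ∘ r₂₃ ∘ r₁₂`; a set-theoretic YBE solution is a
bijection `r : X² → X²` satisfying it. -/
def IsBraided {X : Type*} (r : (X × X) ≃ (X × X)) : Prop :=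
  ∀ p : X × X × X, E23 r (E12 r (E23 r p)) = E12 r (E23 r (E12 r p))

/-- A Drinfeld twist `(F, Φ, Ψ)` on a set-theoretic YBE solution `(X, r)`. -/
structure IsTwist {X : Type*} (r F : (X × X) ≃ (X × X))
    (Φ Ψ : (X × X × X) ≃ (X × X × X)) : Prop where
  t1 : ∀ p, E12 F (Ψ p) = E23 F (Φ p)
  t2 : ∀ p, Φ (E23 r p) = E23 r (Φ p)
  t3 : ∀ p, Ψ (E12 r p) = E12 r (Ψ p)

/-- The twisted map `F ∘ r ∘ F⁻¹`. -/
def twisted {X : Type*} (r F : (X × X) ≃ (X × X)) : (X × X) ≃ (X × X) :=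
  (F.symm.trans r).trans F

/-!
A left non-degenerate involutive solution acts on `X²` and `X³` as the flip does, up to conjugation
by the guitar maps `(x, y) ↦ (x, σ_x y)` and `(x, y, z) ↦ (x, σ_x y, σ_x (σ_y z))`. Composing the
guitar maps of `r₁` with the inverse guitar maps of `r₂` gives bijections `F` of `X²` and `G` of
`X³` that carry `r₁` to `r₂`. Since `F₁₂` carries `(r₁)₁₂` to `(r₂)₁₂` just as `G` does,
`F₁₂⁻¹ ∘ G` commutes with `(r₁)₁₂`; likewise `F₂₃⁻¹ ∘ G` commutes with `(r₁)₂₃`. So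
`(F, F₂₃⁻¹ ∘ G, F₁₂⁻¹ ∘ G)` is a twist.
-/

open Function

section Intertwiners

variable {X : Type*} {r s t F F' : (X × X) ≃ (X × X)} {G G' : (X × X × X) ≃ (X × X × X)}

lemma semiconj_E12 (h : Semiconj F r s) : Semiconj (E12 F) (E12 r) (E12 s) :=
  fun ⟨x, y, z⟩ => congrArg (fun p : X × X => (p.1, p.2, z)) (h (x, y))

lemma semiconj_E23 (h : Semiconj F r s) : Semiconj (E23 F) (E23 r) (E23 s) :=
  fun ⟨x, p⟩ => congrArg (Prod.mk x) (h p)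

/-- Bijections `F` of `X²` and `G` of `X³` intertwining the maps induced by `r` with those induced
by `s`; for solutions `r` and `s`, these are isomorphisms of the corresponding actions of the braid
groups on two and three strands. -/
structure IsBraidIntertwiner (r s F : (X × X) ≃ (X × X)) (G : (X × X × X) ≃ (X × X × X)) :
    Prop where
  semiconj : Semiconj F r s
  semiconj₁₂ : Semiconj G (E12 r) (E12 s)
  semiconj₂₃ : Semiconj G (E23 r) (E23 s)

namespace IsBraidIntertwiner

lemma symm (h : IsBraidIntertwiner r s F G) : IsBraidIntertwiner s r F.symm G.symm where
  semiconj := h.semiconj.inverse_left F.left_inv F.right_inv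
  semiconj₁₂ := h.semiconj₁₂.inverse_left G.left_inv G.right_inv
  semiconj₂₃ := h.semiconj₂₃.inverse_left G.left_inv G.right_inv

lemma trans (h : IsBraidIntertwiner r s F G) (h' : IsBraidIntertwiner s t F' G') :
    IsBraidIntertwiner r t (F.trans F') (G.trans G') where
  semiconj := h'.semiconj.comp_left h.semiconj
  semiconj₁₂ := h'.semiconj₁₂.comp_left h.semiconj₁₂
  semiconj₂₃ := h'.semiconj₂₃.comp_left h.semiconj₂₃

lemma isTwist (h : IsBraidIntertwiner r s F G) :
    IsTwist r F (G.trans (E23 F).symm) (G.trans (E12 F).symm) where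
  t1 p := by simp only [Equiv.trans_apply, Equiv.apply_symm_apply]
  t2 := ((semiconj_E23 h.semiconj).inverse_left (E23 F).left_inv (E23 F).right_inv).comp_left
    h.semiconj₂₃
  t3 := ((semiconj_E12 h.semiconj).inverse_left (E12 F).left_inv (E12 F).right_inv).comp_left
    h.semiconj₁₂

lemma eq_twisted (h : IsBraidIntertwiner r s F G) : s = twisted r F :=
  Equiv.ext fun p => by
    simp only [twisted, Equiv.trans_apply, h.semiconj.eq, Equiv.apply_symm_apply]

end IsBraidIntertwiner

end Intertwiners

section GuitarMaps

variable {X : Type*}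

/-- The map `σ_x` in `r (x, y) = (σ_x y, γ_y x)`. -/
def leftMap (r : X × X → X × X) (x y : X) : X := (r (x, y)).1

/-- The map `γ_y` in `r (x, y) = (σ_x y, γ_y x)`. -/
def rightMap (r : X × X → X × X) (y x : X) : X := (r (x, y)).2

/-- Left non-degeneracy of `r (x, y) = (σ_x y, γ_y x)`: every `σ_x` is a bijection. -/
def IsLeftNondegenerate (r : X × X → X × X) : Prop := ∀ x, Bijective (leftMap r x)

lemma isLeftNondegenerate_of_apply_eq {r : X × X → X × X} {σ γ : X → X → X}
    (hr : ∀ x y, r (x, y) = (σ x y, γ y x)) (hσ : ∀ x, Bijective (σ x)) :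
    IsLeftNondegenerate r := fun x =>
  have leftMap_eq : leftMap r x = σ x := funext fun y => congrArg Prod.fst (hr x y)
  leftMap_eq ▸ hσ x

lemma leftMap_leftMap_rightMap {r : X × X → X × X} (hi : Involutive r) (x y : X) :
    leftMap r (leftMap r x y) (rightMap r y x) = x :=
  congrArg Prod.fst (hi (x, y))

lemma IsBraided.leftMap_leftMap {r : (X × X) ≃ (X × X)} (hb : IsBraided r) (x y z : X) :
    leftMap r x (leftMap r y z) = leftMap r (leftMap r x y) (leftMap r (rightMap r y x) z) :=
  congrArg (fun p : X × X × X => p.1) (hb (x, y, z))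

namespace IsLeftNondegenerate

/-- The guitar map `(x, y) ↦ (x, σ_x y)` on `X²`, conjugating an involutive `r` to the flip. -/
noncomputable def guitar₂ {r : X × X → X × X} (h : IsLeftNondegenerate r) :
    (X × X) ≃ (X × X) :=
  Equiv.prodShear (Equiv.refl X) fun x => Equiv.ofBijective (leftMap r x) (h x)

/-- The guitar map `(x, y, z) ↦ (x, σ_x y, σ_x (σ_y z))` on `X³`, conjugating `r₁₂` and `r₂₃`
to flips of adjacent factors for an involutive solution `r`. -/
noncomputable def guitar₃ {r : X × X → X × X} (h : IsLeftNondegenerate r) :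
    (X × X × X) ≃ (X × X × X) :=
  Equiv.prodShear (Equiv.refl X) fun x =>
    let σx := Equiv.ofBijective (leftMap r x) (h x)
    h.guitar₂.trans (σx.prodCongr σx)

lemma semiconj_guitar₂ {r : X × X → X × X} (h : IsLeftNondegenerate r) (hi : Involutive r) :
    Semiconj h.guitar₂ r Prod.swap := fun ⟨x, y⟩ =>
  congrArg (Prod.mk (leftMap r x y)) (leftMap_leftMap_rightMap hi x y)

variable {r : (X × X) ≃ (X × X)} (h : IsLeftNondegenerate r)

lemma semiconj_guitar₃_E12 (hb : IsBraided r) (hi : Involutive r) :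
    Semiconj h.guitar₃ (E12 r) (E12 (Equiv.prodComm X X)) := fun ⟨x, y, z⟩ =>
  congrArg (Prod.mk (leftMap r x y)) <|
    Prod.ext (leftMap_leftMap_rightMap hi x y) (hb.leftMap_leftMap x y z).symm

lemma semiconj_guitar₃_E23 (hi : Involutive r) :
    Semiconj h.guitar₃ (E23 r) (E23 (Equiv.prodComm X X)) := fun ⟨x, p⟩ =>
  congrArg (fun q : X × X => (x, leftMap r x q.1, leftMap r x q.2)) (h.semiconj_guitar₂ hi p)

lemma isBraidIntertwiner_guitar (hb : IsBraided r) (hi : Involutive r) :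
    IsBraidIntertwiner r (Equiv.prodComm X X) h.guitar₂ h.guitar₃ where
  semiconj := h.semiconj_guitar₂ hi
  semiconj₁₂ := h.semiconj_guitar₃_E12 hb hi
  semiconj₂₃ := h.semiconj_guitar₃_E23 hi

end IsLeftNondegenerate

end GuitarMaps

theorem involutive_solutions_related_by_twist_general {X : Type*} {r₁ r₂ : (X × X) ≃ (X × X)}
    (hb₁ : IsBraided r₁) (hb₂ : IsBraided r₂) (hi₁ : Involutive r₁) (hi₂ : Involutive r₂)
    (h₁ : IsLeftNondegenerate r₁) (h₂ : IsLeftNondegenerate r₂) :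
    ∃ (F : (X × X) ≃ (X × X)) (Φ Ψ : (X × X × X) ≃ (X × X × X)),
      IsTwist r₁ F Φ Ψ ∧ r₂ = twisted r₁ F := by
  have toFlip₁ := h₁.isBraidIntertwiner_guitar hb₁ hi₁
  have toFlip₂ := h₂.isBraidIntertwiner_guitar hb₂ hi₂
  have intertwiner := toFlip₁.trans toFlip₂.symm
  exact ⟨_, _, _, intertwiner.isTwist, intertwiner.eq_twisted⟩

theorem involutive_solutions_related_by_twist {X : Type*}
    (r₁ r₂ : (X × X) ≃ (X × X)) (σ₁ γ₁ σ₂ γ₂ : X → X → X)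
    (hr₁ : ∀ x y, r₁ (x, y) = (σ₁ x y, γ₁ y x))
    (hr₂ : ∀ x y, r₂ (x, y) = (σ₂ x y, γ₂ y x))
    (hb₁ : IsBraided r₁) (hb₂ : IsBraided r₂)
    (hi₁ : ∀ p : X × X, r₁ (r₁ p) = p) (hi₂ : ∀ p : X × X, r₂ (r₂ p) = p)
    (hσ₁ : ∀ x, Function.Bijective (σ₁ x)) (hγ₁ : ∀ y, Function.Bijective (γ₁ y))
    (hσ₂ : ∀ x, Function.Bijective (σ₂ x)) (hγ₂ : ∀ y, Function.Bijective (γ₂ y)) :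
    ∃ (F : (X × X) ≃ (X × X)) (Φ Ψ : (X × X × X) ≃ (X × X × X)),
      IsTwist r₁ F Φ Ψ ∧ ∀ p : X × X, r₂ p = twisted r₁ F p := by
  simpa only [Equiv.ext_iff] using involutive_solutions_related_by_twist_general hb₁ hb₂ hi₁ hi₂
    (isLeftNondegenerate_of_apply_eq hr₁ hσ₁) (isLeftNondegenerate_of_apply_eq hr₂ hσ₂)

end YBETwist
end

section
/- Let (G,·,e) be a group with braiding operator r, written r(x,y) = (σ_x(y), γ_y(x)) with each σ_x bijective, and let (F,Φ,Ψ) be a Drinfeld twist on (G,·,e,r). Let ∘ := m∘F⁻¹ be the twisted multiplication with twisted braiding r' := F∘r∘F⁻¹, written r'(x,y) = (σ̲_x(y), γ̲_y(x)) with each σ̲_x bijective, and let ⋆ and ⋆' be the respective additive group operations, x ⋆ y := x·σ_x⁻¹(y) and x ⋆' y := x∘σ̲_x⁻¹(y). Then there exists a family of bijections {f_x : G → G}_{x∈G} such that each f_x satisfies f_x(a⋆b) = f_x(a) ⋆' f_x(b) for all a,b ∈ G and f_x(x) = x, and for all x,y ∈ G: F(x,y) = (f_{x·y}(x), σ̲_{f_{x·y}(x)}⁻¹(f_{x·y}(σ_x(y)))),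 equivalently F(x,y) = (f_{x·y}(x), f_{x·y}(x)^{-∘} ∘ (x·y)), where ^{-∘} denotes the inverse with respect to ∘. -/
namespace BraceTwist

/-- Apply a map on `G × G` to the factors 1,2 of a triple: `f₁₂ = f × id`. -/
def E12 {G : Type*} (f : (G × G) ≃ (G × G)) : (G × G × G) ≃ (G × G × G) :=
  ((Equiv.prodAssoc G G G).symm.trans (f.prodCongr (Equiv.refl G))).trans
    (Equiv.prodAssoc G G G)

/-- Apply a map on `G × G` to the factors 2,3 of a triple: `f₂₃ = id × f`. -/
def E23 {G : Type*} (f : (G × G) ≃ (G × G)) : (G × G × G) ≃ (G × G × G) :=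
  (Equiv.refl G).prodCongr f

/-- `m₁₂ : G³ → G²`, multiplying the first two factors. -/
def M12 {G : Type*} (mul : G → G → G) : G × G × G → G × G :=
  fun p => (mul p.1 p.2.1, p.2.2)

/-- `m₂₃ : G³ → G²`, multiplying the last two factors. -/
def M23 {G : Type*} (mul : G → G → G) : G × G × G → G × G :=
  fun p => (p.1, mul p.2.1 p.2.2)

/-- `(mul, e, inv)` is a group structure on `G`. -/
structure IsGroup {G : Type*} (mul : G → G → G) (e : G) (inv : G → G) : Prop where
  mul_assoc : ∀ a b c, mul (mul a b) c = mul a (mul b c)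
  one_mul : ∀ a, mul e a = a
  mul_one : ∀ a, mul a e = a
  inv_mul : ∀ a, mul (inv a) a = e
  mul_inv : ∀ a, mul a (inv a) = e

/-- `r` is a braiding operator on the group `(G, mul, e)`. -/
structure IsBraidingOp {G : Type*} (mul : G → G → G) (e : G)
    (r : (G × G) ≃ (G × G)) : Prop where
  unit_left : ∀ g, r (e, g) = (g, e)
  unit_right : ∀ g, r (g, e) = (e, g)
  br1 : ∀ p : G × G × G, r (M12 mul p) = M23 mul (E12 r (E23 r p))
  br2 : ∀ p : G × G × G, r (M23 mul p) = M12 mul (E23 r (E12 r p))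
  mul_r : ∀ p : G × G, mul (r p).1 (r p).2 = mul p.1 p.2

/-- A Drinfeld twist `(F, Φ, Ψ)` on the group with braiding operator `(G, mul, e, r)`. -/
structure IsGrpTwist {G : Type*} (mul : G → G → G) (e : G)
    (r F : (G × G) ≃ (G × G)) (Φ Ψ : (G × G × G) ≃ (G × G × G)) : Prop where
  t1 : ∀ p, E12 F (Ψ p) = E23 F (Φ p)
  t2 : ∀ p, Φ (E23 r p) = E23 r (Φ p)
  t3 : ∀ p, Ψ (E12 r p) = E12 r (Ψ p)
  g1a : ∀ x y, Ψ (x, y, e) = (x, y, e)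
  g1b : ∀ x y, Φ (e, x, y) = (e, x, y)
  g2a : ∀ x, F (e, x) = (e, x)
  g2b : ∀ x, F (x, e) = (x, e)
  g3 : ∀ p : G × G × G, M23 mul (Φ p) = F (M23 mul p)
  g4 : ∀ p : G × G × G, M12 mul (Ψ p) = F (M12 mul p)

/-- The twisted map `F ∘ r ∘ F⁻¹`. -/
def twisted {G : Type*} (r F : (G × G) ≃ (G × G)) : (G × G) ≃ (G × G) :=
  (F.symm.trans r).trans F

/-- The twisted multiplication `m ∘ F⁻¹`. -/
def twistMul {G : Type*} (mul : G → G → G) (F : (G × G) ≃ (G × G)) : G → G → G :=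
  fun x y => mul (F.symm (x, y)).1 (F.symm (x, y)).2

/-!
Since `m = (m ∘ F⁻¹) ∘ F`, the map `F` carries the fibre `{(a, a⁻¹ · x)}` of `m` over `x` onto the
fibre of the twisted multiplication `∘` over the same `x`. The first projection identifies both
fibres with `G`, and `f_x` is the bijection of `G` that corresponds to `F`.

Let `t = x · y · z` and let `(a, b)` be the first two components of `Ψ (x, y, z)`. Then
`F (a, b)` has first component `f_t x` by (T1) and (G3). Since `Ψ` commutes with `r₁₂`, the same
computation for `r (x, y)` shows that `F (r (a, b))` has first component `f_t (σ_x y)`, so the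
second component of `F (a, b)` is `σ̲_{f_t x}⁻¹ (f_t (σ_x y))`. For `z = e` this is the formula for
`F`; multiplying the two components, with `a · b = f_t (x · y)` from (G4), shows that `f_t` is a
homomorphism.
-/

namespace IsGroup

variable {G : Type*} {mul : G → G → G} {e : G} {inv : G → G}

theorem inv_mul_cancel_left (hG : IsGroup mul e inv) (a b : G) : mul (inv a) (mul a b) = b := by
  rw [← hG.mul_assoc, hG.inv_mul, hG.one_mul]

theorem mul_inv_cancel_left (hG : IsGroup mul e inv) (a b : G) : mul a (mul (inv a) b) = b := by
  rw [← hG.mul_assoc, hG.mul_inv, hG.one_mul]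

end IsGroup

section FiberMap

variable {G : Type*} {mul mul' : G → G → G} {e e' : G} {inv inv' : G → G}

/-- The map `f_x` of the twist decomposition: the action of `F` on the fibre of `mul` over `x`,
where the point `(a, a⁻¹ · x)` of the fibre is represented by its first coordinate `a`. -/
def fiberMap (mul : G → G → G) (inv : G → G) (F : G × G → G × G) (x a : G) : G :=
  (F (a, mul (inv a) x)).1

theorem fiberMap_mul_left (hG : IsGroup mul e inv) (F : G × G → G × G) (a b : G) :
    fiberMap mul inv F (mul a b) a = (F (a, b)).1 := by
  rw [fiberMap, hG.inv_mul_cancel_left]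

theorem apply_eq_fiberMap_inv_mul (hG : IsGroup mul e inv) (hG' : IsGroup mul' e' inv')
    {F : G × G → G × G} (hF : ∀ p, mul' (F p).1 (F p).2 = mul p.1 p.2) (a b : G) :
    F (a, b) = (fiberMap mul inv F (mul a b) a,
      mul' (inv' (fiberMap mul inv F (mul a b) a)) (mul a b)) := by
  have hsnd : (F (a, b)).2 = mul' (inv' (F (a, b)).1) (mul a b) := by
    rw [← hF (a, b), hG'.inv_mul_cancel_left]
  rw [fiberMap_mul_left hG, ← hsnd]

theorem leftInverse_fiberMap_symm (hG : IsGroup mul e inv) (hG' : IsGroup mul' e' inv')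
    {F : (G × G) ≃ (G × G)} (hF : ∀ p, mul' (F p).1 (F p).2 = mul p.1 p.2) (x : G) :
    Function.LeftInverse (fiberMap mul' inv' F.symm x) (fiberMap mul inv F x) := by
  intro a
  have h := apply_eq_fiberMap_inv_mul hG hG' hF a (mul (inv a) x)
  rw [hG.mul_inv_cancel_left] at h
  rw [fiberMap, ← h, F.symm_apply_apply]

theorem bijective_fiberMap (hG : IsGroup mul e inv) (hG' : IsGroup mul' e' inv')
    {F : (G × G) ≃ (G × G)} (hF : ∀ p, mul' (F p).1 (F p).2 = mul p.1 p.2) (x : G) :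
    Function.Bijective (fiberMap mul inv F x) := by
  have hF' (p : G × G) : mul (F.symm p).1 (F.symm p).2 = mul' p.1 p.2 := by
    rw [← hF, F.apply_symm_apply]
  exact ⟨(leftInverse_fiberMap_symm hG hG' hF x).injective,
    (leftInverse_fiberMap_symm hG' hG hF' x).surjective⟩

end FiberMap

section Twisted

variable {G : Type*}

theorem twistMul_apply (mul : G → G → G) (F : (G × G) ≃ (G × G)) (p : G × G) :
    twistMul mul F (F p).1 (F p).2 = mul p.1 p.2 := by
  simp [twistMul]

theorem M12_twistMul_E12 (mul : G → G → G) (F : (G × G) ≃ (G × G)) (q : G × G × G) :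
    M12 (twistMul mul F) (E12 F q) = M12 mul q :=
  Prod.ext (twistMul_apply mul F (q.1, q.2.1)) rfl

theorem M23_twistMul_E23 (mul : G → G → G) (F : (G × G) ≃ (G × G)) (q : G × G × G) :
    M23 (twistMul mul F) (E23 F q) = M23 mul q :=
  Prod.ext rfl (twistMul_apply mul F q.2)

theorem twisted_apply (r F : (G × G) ≃ (G × G)) (p : G × G) : twisted r F (F p) = F (r p) := by
  simp [twisted]

theorem snd_apply_eq_of_twisted {r F : (G × G) ≃ (G × G)} {σ' γ' τ' : G → G → G}
    (hr' : ∀ x y, twisted r F (x, y) = (σ' x y, γ' y x))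
    (hτ' : ∀ x, Function.LeftInverse (τ' x) (σ' x)) (p : G × G) :
    (F p).2 = τ' (F p).1 (F (r p)).1 := by
  rw [← twisted_apply, ← Prod.mk.eta (p := F p), hr', hτ']

end Twisted

/-- A one-sided Drinfeld twist: the conditions of a Drinfeld twist that involve the braiding only
through `Ψ` and the unit only on the right. The decomposition of `F` is proved for these. -/
structure IsOneSidedTwist {G : Type*} (mul : G → G → G) (e : G)
    (r F : (G × G) ≃ (G × G)) (Φ Ψ : (G × G × G) ≃ (G × G × G)) : Prop where
  E12_psi : ∀ p, E12 F (Ψ p) = E23 F (Φ p)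
  psi_E12 : ∀ p, Ψ (E12 r p) = E12 r (Ψ p)
  psi_unit : ∀ x y, Ψ (x, y, e) = (x, y, e)
  apply_unit : ∀ x, F (x, e) = (x, e)
  M23_phi : ∀ p : G × G × G, M23 mul (Φ p) = F (M23 mul p)
  M12_psi : ∀ p : G × G × G, M12 mul (Ψ p) = F (M12 mul p)

theorem IsGrpTwist.isOneSidedTwist {G : Type*} {mul : G → G → G} {e : G}
    {r F : (G × G) ≃ (G × G)} {Φ Ψ : (G × G × G) ≃ (G × G × G)}
    (ht : IsGrpTwist mul e r F Φ Ψ) : IsOneSidedTwist mul e r F Φ Ψ :=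
  ⟨ht.t1, ht.t3, ht.g1a, ht.g2b, ht.g3, ht.g4⟩

namespace IsOneSidedTwist

variable {G : Type*} {mul : G → G → G} {e : G} {inv oinv : G → G} {r F : (G × G) ≃ (G × G)}
  {Φ Ψ : (G × G × G) ≃ (G × G × G)} {σ γ σ' γ' τ' : G → G → G}

-- Every triple has the form `F₁₂ (Ψ p) = F₂₃ (Φ p)`, and both twisted products of it equal the
-- product of `p`.
theorem twistMul_assoc (ht : IsOneSidedTwist mul e r F Φ Ψ)
    (hmul : ∀ a b c, mul (mul a b) c = mul a (mul b c)) (a b c : G) :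
    twistMul mul F (twistMul mul F a b) c = twistMul mul F a (twistMul mul F b c) := by
  let prod (p : G × G) : G := twistMul mul F p.1 p.2
  obtain ⟨p, hp⟩ : ∃ p, E12 F (Ψ p) = (a, b, c) := (Ψ.trans (E12 F)).surjective (a, b, c)
  calc prod (M12 (twistMul mul F) (a, b, c))
      = prod (F (M12 mul p)) := by rw [← hp, M12_twistMul_E12, ht.M12_psi]
    _ = mul (mul p.1 p.2.1) p.2.2 := twistMul_apply mul F (M12 mul p)
    _ = mul p.1 (mul p.2.1 p.2.2) := hmul _ _ _
    _ = prod (F (M23 mul p)) := (twistMul_apply mul F (M23 mul p)).symm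
    _ = prod (M23 (twistMul mul F) (a, b, c)) := by
      rw [← hp, ht.E12_psi, M23_twistMul_E23, ht.M23_phi]

theorem isGroup_twistMul (ht : IsOneSidedTwist mul e r F Φ Ψ) (hG : IsGroup mul e inv)
    (hoinv : ∀ x, twistMul mul F (oinv x) x = e ∧ twistMul mul F x (oinv x) = e) :
    IsGroup (twistMul mul F) e oinv := by
  have assoc := ht.twistMul_assoc hG.mul_assoc
  have mul_one (x : G) : twistMul mul F x e = x := by
    have h := twistMul_apply mul F (x, e)
    rwa [ht.apply_unit, hG.mul_one] at h
  have one_mul (x : G) : twistMul mul F e x = x := by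
    rw [← (hoinv x).2, assoc, (hoinv x).1, mul_one]
  exact ⟨assoc, one_mul, mul_one, fun x => (hoinv x).1, fun x => (hoinv x).2⟩

theorem fiberMap_self (ht : IsOneSidedTwist mul e r F Φ Ψ) (hG : IsGroup mul e inv) (x : G) :
    fiberMap mul inv F x x = x := by
  rw [fiberMap, hG.inv_mul, ht.apply_unit]

theorem fst_apply_psi (ht : IsOneSidedTwist mul e r F Φ Ψ) (hG : IsGroup mul e inv) (x y z : G) :
    (F ((Ψ (x, y, z)).1, (Ψ (x, y, z)).2.1)).1 =
      fiberMap mul inv F (mul (mul x y) z) x :=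
  calc (F ((Ψ (x, y, z)).1, (Ψ (x, y, z)).2.1)).1
      = (Φ (x, y, z)).1 := congrArg Prod.fst (ht.E12_psi (x, y, z))
    _ = (F (x, mul y z)).1 := congrArg Prod.fst (ht.M23_phi (x, y, z))
    _ = fiberMap mul inv F (mul (mul x y) z) x := by rw [hG.mul_assoc, fiberMap_mul_left hG]

theorem fst_apply_r_psi (ht : IsOneSidedTwist mul e r F Φ Ψ) (hG : IsGroup mul e inv)
    (hmr : ∀ p, mul (r p).1 (r p).2 = mul p.1 p.2) (x y z : G) :
    (F (r ((Ψ (x, y, z)).1, (Ψ (x, y, z)).2.1))).1 =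
      fiberMap mul inv F (mul (mul x y) z) (r (x, y)).1 := by
  have hΨ : Ψ ((r (x, y)).1, (r (x, y)).2, z) = E12 r (Ψ (x, y, z)) := ht.psi_E12 (x, y, z)
  have h := ht.fst_apply_psi hG (r (x, y)).1 (r (x, y)).2 z
  rwa [hΨ, hmr] at h

theorem apply_psi (ht : IsOneSidedTwist mul e r F Φ Ψ) (hG : IsGroup mul e inv)
    (hmr : ∀ p, mul (r p).1 (r p).2 = mul p.1 p.2)
    (hr : ∀ x y, r (x, y) = (σ x y, γ y x))
    (hr' : ∀ x y, twisted r F (x, y) = (σ' x y, γ' y x))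
    (hτ' : ∀ x, Function.LeftInverse (τ' x) (σ' x)) (x y z : G) :
    F ((Ψ (x, y, z)).1, (Ψ (x, y, z)).2.1) =
      (fiberMap mul inv F (mul (mul x y) z) x,
        τ' (fiberMap mul inv F (mul (mul x y) z) x)
          (fiberMap mul inv F (mul (mul x y) z) (σ x y))) := by
  refine Prod.ext (ht.fst_apply_psi hG x y z) ?_
  rw [snd_apply_eq_of_twisted hr' hτ', ht.fst_apply_psi hG, ht.fst_apply_r_psi hG hmr, hr]

theorem apply_eq_fiberMap (ht : IsOneSidedTwist mul e r F Φ Ψ) (hG : IsGroup mul e inv)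
    (hmr : ∀ p, mul (r p).1 (r p).2 = mul p.1 p.2)
    (hr : ∀ x y, r (x, y) = (σ x y, γ y x))
    (hr' : ∀ x y, twisted r F (x, y) = (σ' x y, γ' y x))
    (hτ' : ∀ x, Function.LeftInverse (τ' x) (σ' x)) (x y : G) :
    F (x, y) = (fiberMap mul inv F (mul x y) x,
      τ' (fiberMap mul inv F (mul x y) x) (fiberMap mul inv F (mul x y) (σ x y))) := by
  simpa only [ht.psi_unit, hG.mul_one] using ht.apply_psi hG hmr hr hr' hτ' x y e

theorem fiberMap_mul (ht : IsOneSidedTwist mul e r F Φ Ψ) (hG : IsGroup mul e inv)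
    (hmr : ∀ p, mul (r p).1 (r p).2 = mul p.1 p.2)
    (hr : ∀ x y, r (x, y) = (σ x y, γ y x))
    (hr' : ∀ x y, twisted r F (x, y) = (σ' x y, γ' y x))
    (hτ' : ∀ x, Function.LeftInverse (τ' x) (σ' x)) (t x y : G) :
    fiberMap mul inv F t (mul x y) =
      twistMul mul F (fiberMap mul inv F t x)
        (τ' (fiberMap mul inv F t x) (fiberMap mul inv F t (σ x y))) := by
  obtain ⟨z, rfl⟩ : ∃ z, mul (mul x y) z = t := ⟨_, hG.mul_inv_cancel_left (mul x y) t⟩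
  let w : G × G := ((Ψ (x, y, z)).1, (Ψ (x, y, z)).2.1)
  have hw : F w = _ := ht.apply_psi hG hmr hr hr' hτ' x y z
  calc fiberMap mul inv F (mul (mul x y) z) (mul x y)
      = (F (mul x y, z)).1 := fiberMap_mul_left hG F (mul x y) z
    _ = mul w.1 w.2 := (congrArg Prod.fst (ht.M12_psi (x, y, z))).symm
    _ = twistMul mul F (F w).1 (F w).2 := (twistMul_apply mul F w).symm
    _ = _ := by rw [hw]

end IsOneSidedTwist

theorem twist_decomposition_general {G : Type*} {mul : G → G → G} {e : G} {inv oinv : G → G}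
    (hG : IsGroup mul e inv) {r F : (G × G) ≃ (G × G)} {Φ Ψ : (G × G × G) ≃ (G × G × G)}
    {σ γ τ σ' γ' τ' : G → G → G}
    (hmr : ∀ p, mul (r p).1 (r p).2 = mul p.1 p.2)
    (hr : ∀ x y, r (x, y) = (σ x y, γ y x))
    (hτ : ∀ x, Function.RightInverse (τ x) (σ x))
    (ht : IsOneSidedTwist mul e r F Φ Ψ)
    (hr' : ∀ x y, twisted r F (x, y) = (σ' x y, γ' y x))
    (hτ' : ∀ x, Function.LeftInverse (τ' x) (σ' x))
    (hoinv : ∀ x, twistMul mul F (oinv x) x = e ∧ twistMul mul F x (oinv x) = e) :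
    ∃ f : G → G → G,
      (∀ x, Function.Bijective (f x)) ∧
      (∀ x a b, f x (mul a (τ a b)) = twistMul mul F (f x a) (τ' (f x a) (f x b))) ∧
      (∀ x, f x x = x) ∧
      (∀ x y, F (x, y) =
        (f (mul x y) x, τ' (f (mul x y) x) (f (mul x y) (σ x y)))) ∧
      (∀ x y, F (x, y) =
        (f (mul x y) x, twistMul mul F (oinv (f (mul x y) x)) (mul x y))) := by
  have hG' := ht.isGroup_twistMul hG hoinv
  have hF := twistMul_apply mul F
  refine ⟨fiberMap mul inv F, bijective_fiberMap hG hG' hF, fun x a b => ?_,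
    ht.fiberMap_self hG, ht.apply_eq_fiberMap hG hmr hr hr' hτ',
    apply_eq_fiberMap_inv_mul hG hG' hF⟩
  rw [ht.fiberMap_mul hG hmr hr hr' hτ', hτ a b]

theorem twist_decomposition {G : Type*} (mul : G → G → G) (e : G)
    (inv : G → G) (hG : IsGroup mul e inv)
    (r F : (G × G) ≃ (G × G)) (Φ Ψ : (G × G × G) ≃ (G × G × G))
    (σ γ τ σ' γ' τ' : G → G → G) (oinv : G → G)
    (hbr : IsBraidingOp mul e r)
    (hr : ∀ x y, r (x, y) = (σ x y, γ y x))
    (hτ : ∀ x, Function.LeftInverse (τ x) (σ x) ∧ Function.RightInverse (τ x) (σ x))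
    (ht : IsGrpTwist mul e r F Φ Ψ)
    (hr' : ∀ x y, twisted r F (x, y) = (σ' x y, γ' y x))
    (hτ' : ∀ x, Function.LeftInverse (τ' x) (σ' x) ∧ Function.RightInverse (τ' x) (σ' x))
    (hoinv : ∀ x, twistMul mul F (oinv x) x = e ∧ twistMul mul F x (oinv x) = e) :
    ∃ f : G → G → G,
      (∀ x, Function.Bijective (f x)) ∧
      (∀ x a b, f x (mul a (τ a b)) = twistMul mul F (f x a) (τ' (f x a) (f x b))) ∧
      (∀ x, f x x = x) ∧
      (∀ x y, F (x, y) =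
        (f (mul x y) x, τ' (f (mul x y) x) (f (mul x y) (σ x y)))) ∧
      (∀ x y, F (x, y) =
        (f (mul x y) x, twistMul mul F (oinv (f (mul x y) x)) (mul x y))) :=
  twist_decomposition_general hG hbr.mul_r hr (fun x => (hτ x).2) ht.isOneSidedTwist hr'
    (fun x => (hτ' x).1) hoinv

end BraceTwist
end
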